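/- Let G be a connected graph of order n ≥ 2 and let H be any graph, and let β(H) denote the number of isolated vertices of H. If n > β(H) ≥ 2, then pd(G⊙H) ≥ β(H) + 1. -/

import Mathlib

/-!
In a resolving partition of `G ⊙ H`, the isolated vertices of one copy of `H` become leaves with a
common neighbour, hence are twins; twins lying in the same cell would have the same
representation, so these `β(H)` leaves lie in pairwise distinct cells (`leaf_cells_injOn`).
Suppose there are at most `β(H)` cells. Then every cell meets every copy of `H`, so each vertex of
`G` is at distance at most `1` from every cell and its representation is determined by the cell
containing it. Since `G` has more than `β(H)` vertices, two of them share a cell and are not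
resolved. The infimum defining the partition dimension is over a nonempty set because the partition
into singletons is resolving (`singletons_isResolvingPartition`).
-/

open SimpleGraph

/-- The corona product `G ⊙ H`: one copy of `G`, one copy of `H` for each vertex of `G`,
with the `i`-th vertex of `G` joined to every vertex of the `i`-th copy of `H`. -/
def corona {α β : Type*} (G : SimpleGraph α) (H : SimpleGraph β) :
    SimpleGraph (α ⊕ α × β) :=
  SimpleGraph.fromRel (fun x y =>
    match x, y with
    | Sum.inl a, Sum.inl b => G.Adj a b
    | Sum.inl a, Sum.inr iu => a = iu.1
    | Sum.inr iu, Sum.inr jw => iu.1 = jw.1 ∧ H.Adj iu.2 jw.2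
    | _, _ => False)

/-- The distance from a vertex to a set of vertices: `d(v,A) = min_{u ∈ A} d(v,u)`. -/
noncomputable def setDist {α : Type*} (G : SimpleGraph α) (v : α) (A : Set α) : ℕ :=
  sInf (G.dist v '' A)

/-- `S` is a resolving set for `G`: distinct vertices have distinct metric representations. -/
def IsResolvingSet {α : Type*} (G : SimpleGraph α) (S : Set α) : Prop :=
  ∀ u v : α, (∀ w ∈ S, G.dist u w = G.dist v w) → u = v

/-- The metric dimension of `G`: minimum cardinality of a resolving set. -/
noncomputable def metricDim {α : Type*} (G : SimpleGraph α) : ℕ :=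
  sInf {k | ∃ S : Set α, IsResolvingSet G S ∧ S.ncard = k}

/-- A family of sets is a resolving partition for `G` if it is a partition of the vertex set
into nonempty cells and distinct vertices have distinct partition representations. -/
def IsResolvingPartition {α : Type*} (G : SimpleGraph α) (P : Set (Set α)) : Prop :=
  (∀ A ∈ P, A.Nonempty) ∧ (∀ v : α, ∃! A : Set α, A ∈ P ∧ v ∈ A) ∧
    ∀ u v : α, (∀ A ∈ P, setDist G u A = setDist G v A) → u = v

/-- The partition dimension of `G`: minimum number of cells in a resolving partition. -/
noncomputable def partitionDim {α : Type*} (G : SimpleGraph α) : ℕ :=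
  sInf {t | ∃ P : Set (Set α), IsResolvingPartition G P ∧ P.ncard = t}

/-- `c(H)`: the maximum cardinality of a connected component of `H` which is isomorphic to a
complete graph (i.e. whose vertex set is a clique). -/
noncomputable def maxCompleteComp {β : Type*} (H : SimpleGraph β) : ℕ :=
  sSup {k | ∃ C : H.ConnectedComponent, H.IsClique C.supp ∧ C.supp.ncard = k}

/-- `β(H)`: the number of isolated vertices of `H`. -/
noncomputable def numIsolated {β : Type*} (H : SimpleGraph β) : ℕ :=
  Set.ncard {v : β | ∀ u, ¬ H.Adj v u}

/-- `α(H)`: the number of connected components of `H` of order greater than one. -/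
noncomputable def numBigComp {β : Type*} (H : SimpleGraph β) : ℕ :=
  Set.ncard {C : H.ConnectedComponent | 1 < C.supp.ncard}

section Corona

variable {V W : Type*} {G : SimpleGraph V} {H : SimpleGraph W}

lemma corona_adj_inl_inl {a b : V} (h : G.Adj a b) :
    (corona G H).Adj (Sum.inl a) (Sum.inl b) := by
  simp [corona, h, h.ne]

lemma corona_adj_inl_inr (a : V) (w : W) :
    (corona G H).Adj (Sum.inl a) (Sum.inr (a, w)) := by
  simp [corona]

lemma corona_adj_leaf {w : W} (hw : ∀ u, ¬ H.Adj w u) (a : V) (x : V ⊕ V × W) :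
    (corona G H).Adj (Sum.inr (a, w)) x ↔ x = Sum.inl a := by
  have hw' : ∀ u, ¬ H.Adj u w := fun u h => hw u h.symm
  rcases x with b | ⟨b, u⟩ <;> simp [corona, hw, hw']

lemma corona_connected (hG : G.Connected) : (corona G H).Connected := by
  obtain ⟨a₀⟩ := hG.nonempty
  let f : G →g corona G H := ⟨Sum.inl, fun h => corona_adj_inl_inl h⟩
  have key : ∀ x, (corona G H).Reachable (Sum.inl a₀) x := by
    rintro (b | ⟨b, w⟩)
    · exact (hG.preconnected a₀ b).map f
    · exact ((hG.preconnected a₀ b).map f).trans (corona_adj_inl_inr b w).reachable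
  have : Nonempty (V ⊕ V × W) := ⟨Sum.inl a₀⟩
  exact ⟨fun x y => (key x).symm.trans (key y)⟩

end Corona

section SetDist

variable {α : Type*} {K : SimpleGraph α}

/-- A shortest walk leaving `u` can be rerouted to start at `v` when every neighbour of `u` is a
neighbour of `v`. -/
lemma dist_le_of_neighbors_subset (hK : K.Connected) {u v x : α}
    (h : ∀ y, K.Adj u y → K.Adj v y) (hx : x ≠ u) : K.dist v x ≤ K.dist u x := by
  obtain ⟨p, hp⟩ := hK.exists_walk_length_eq_dist u x
  cases p with
  | nil => exact absurd rfl hx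
  | cons e q =>
    rw [← hp]
    exact SimpleGraph.dist_le (Walk.cons (h _ e) q)

lemma setDist_eq_zero_of_mem {v : α} {A : Set α} (hv : v ∈ A) : setDist K v A = 0 :=
  Nat.sInf_eq_zero.2 (Or.inl ⟨v, hv, SimpleGraph.dist_self⟩)

lemma setDist_eq_one (hK : K.Connected) {v x : α} {A : Set α} (hv : v ∉ A) (hx : x ∈ A)
    (hadj : K.Adj v x) : setDist K v A = 1 := by
  have hmem : 1 ∈ K.dist v '' A := ⟨x, hx, SimpleGraph.dist_eq_one_iff_adj.2 hadj⟩
  refine le_antisymm (Nat.sInf_le hmem) ?_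
  obtain ⟨y, hy, hy'⟩ := Nat.sInf_mem ⟨1, hmem⟩
  change 1 ≤ sInf _
  rw [← hy']
  exact hK.pos_dist_of_ne (fun h => hv (h ▸ hy))

/-- Two vertices with the same neighbours are equidistant from any set avoiding both. -/
lemma setDist_eq_of_twins (hK : K.Connected) {u v : α} {A : Set α}
    (h : ∀ y, K.Adj u y ↔ K.Adj v y) (hu : u ∉ A) (hv : v ∉ A) :
    setDist K u A = setDist K v A := by
  unfold setDist
  congr 1
  refine Set.image_congr fun x hx => le_antisymm ?_ ?_
  · exact dist_le_of_neighbors_subset hK (fun y => (h y).2) (fun e => hv (e ▸ hx))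
  · exact dist_le_of_neighbors_subset hK (fun y => (h y).1) (fun e => hu (e ▸ hx))

lemma singletons_isResolvingPartition (hK : K.Connected) :
    IsResolvingPartition K (Set.range fun v : α => ({v} : Set α)) := by
  refine ⟨?_, fun v => ⟨{v}, ⟨⟨v, rfl⟩, rfl⟩, ?_⟩, fun u v h => ?_⟩
  · rintro _ ⟨v, rfl⟩
    exact Set.singleton_nonempty v
  · rintro _ ⟨⟨w, rfl⟩, hw⟩
    rw [Set.mem_singleton_iff.1 hw]
  · have h' := h {v} ⟨v, rfl⟩
    simpa [setDist, hK.dist_eq_zero_iff] using h'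

end SetDist

/-- In a resolving partition with cell assignment `c`, the leaves attached to a vertex of `G` lie
in distinct cells, since they are twins. -/
lemma leaf_cells_injOn {V W : Type*} {G : SimpleGraph V} {H : SimpleGraph W}
    (hG : G.Connected) {P : Set (Set (V ⊕ V × W))}
    (hres : ∀ u v, (∀ A ∈ P, setDist (corona G H) u A = setDist (corona G H) v A) → u = v)
    {c : V ⊕ V × W → Set (V ⊕ V × W)} (hmem : ∀ v, v ∈ c v)
    (huniq : ∀ v, ∀ A ∈ P, v ∈ A → A = c v) (a : V) :
    Set.InjOn (fun w => c (Sum.inr (a, w))) {w : W | ∀ u, ¬ H.Adj w u} := by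
  intro w hw w' hw' hc
  change c (Sum.inr (a, w)) = c (Sum.inr (a, w')) at hc
  have heq : (Sum.inr (a, w) : V ⊕ V × W) = Sum.inr (a, w') := by
    refine hres _ _ fun A hA => ?_
    by_cases hwA : Sum.inr (a, w) ∈ A
    · have hwA' : Sum.inr (a, w') ∈ A := by
        rw [huniq _ A hA hwA, hc]
        exact hmem _
      rw [setDist_eq_zero_of_mem hwA, setDist_eq_zero_of_mem hwA']
    · have hwA' : Sum.inr (a, w') ∉ A := fun h => hwA <| by
        rw [huniq _ A hA h, ← hc]
        exact hmem _
      refine setDist_eq_of_twins (corona_connected hG) (fun y => ?_) hwA hwA'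
      rw [corona_adj_leaf hw, corona_adj_leaf hw']
  simpa using heq

/-- Let `G` be a connected graph of order `n ≥ 2` and `H` any graph, with `β(H)`
the number of isolated vertices of `H`. If `n > β(H) ≥ 2`, then `pd(G⊙H) ≥ β(H) + 1`. -/
theorem stmt12 {V W : Type*} [Fintype V] [Fintype W] (G : SimpleGraph V) (H : SimpleGraph W)
    (hG : G.Connected) (n : ℕ) (hn : Fintype.card V = n) (h₁ : 2 ≤ n)
    (h₂ : n > numIsolated H) (h₃ : 2 ≤ numIsolated H) :
    partitionDim (corona G H) ≥ numIsolated H + 1 := by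
  have hK : (corona G H).Connected := corona_connected hG
  refine le_csInf ⟨_, _, singletons_isResolvingPartition hK, rfl⟩ ?_
  rintro _ ⟨P, ⟨-, hpart, hres⟩, rfl⟩
  by_contra! hlt
  choose c hc huniq using hpart
  have huniq' : ∀ v, ∀ A ∈ P, v ∈ A → A = c v := fun v A hA hv => huniq v A ⟨hA, hv⟩
  -- With at most `β(H)` cells, the leaves at `a` occupy every cell.
  have hcover : ∀ a : V, (fun w => c (Sum.inr (a, w))) '' {w : W | ∀ u, ¬ H.Adj w u} = P := by
    intro a
    refine Set.eq_of_subset_of_ncard_le ?_ ?_ (Set.toFinite P)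
    · rintro _ ⟨w, -, rfl⟩
      exact (hc _).1
    · rw [(leaf_cells_injOn hG hres (fun v => (hc v).2) huniq' a).ncard_image]
      exact Nat.le_of_lt_succ hlt
  have hnear : ∀ a : V, ∀ A ∈ P, ∃ w : W, Sum.inr (a, w) ∈ A := by
    intro a A hA
    rw [← hcover a] at hA
    obtain ⟨w, -, rfl⟩ := hA
    exact ⟨w, (hc _).2⟩
  obtain ⟨a, -, b, -, hab, hcab⟩ := Set.exists_ne_map_eq_of_ncard_lt_of_maps_to
    (s := (Set.univ : Set V)) (t := P) (f := fun a => c (Sum.inl a))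
    (by rw [Set.ncard_univ, Nat.card_eq_fintype_card]; omega)
    (fun a _ => (hc _).1) (Set.toFinite P)
  have hcell : c (Sum.inl a) = c (Sum.inl b) := hcab
  refine hab (Sum.inl_injective (hres _ _ fun A hA => ?_))
  by_cases haA : Sum.inl a ∈ A
  · have hbA : Sum.inl b ∈ A := by
      rw [huniq' _ A hA haA, hcell]
      exact (hc _).2
    rw [setDist_eq_zero_of_mem haA, setDist_eq_zero_of_mem hbA]
  · have hbA : Sum.inl b ∉ A := fun h => haA <| by
      rw [huniq' _ A hA h, ← hcell]
      exact (hc _).2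
    obtain ⟨w, hw⟩ := hnear a A hA
    obtain ⟨w', hw'⟩ := hnear b A hA
    rw [setDist_eq_one hK haA hw (corona_adj_inl_inr a w),
      setDist_eq_one hK hbA hw' (corona_adj_inl_inr b w')]
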